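/- arXiv:2307.12311 — 3 statements merged into one kernel-verified Lean document; each statement's English description precedes it below -/
import Mathlib

section
/- For every positive integer m ≤ 4356, there exists a subset A of Z/mZ such that 1 ≤ σ_A(n) ≤ 132 for every n in Z/mZ. -/
/-!
Write each residue in base `b` as `n = r + b * s` with a low digit `r < b` and a high digit `s < q`.
If `A` consists of all `r` and all `b * s`, then `A + A` is everything. As `a` determines `n - a`,
no element has more than `#A ≤ b + q` representations; `b = q = 66` gives `4356` and `132`.
-/

open Finset
open scoped Pointwise

/-- The two-digit numbers in base `b`, with high digit `< q`, of which at most one digit is nonzero.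
They serve as an additive basis of order two for the natural numbers below `b * q`. -/
def singleDigitSet (b q : ℕ) : Finset ℕ := range b ∪ (range q).image (b * ·)

theorem card_singleDigitSet_le (b q : ℕ) : #(singleDigitSet b q) ≤ b + q :=
  calc
    #(singleDigitSet b q) ≤ #(range b) + #((range q).image (b * ·)) := card_union_le _ _
    _ ≤ #(range b) + #(range q) := Nat.add_le_add_left card_image_le _
    _ = b + q := by rw [card_range, card_range]

theorem range_mul_subset_singleDigitSet_add_self (b q : ℕ) :
    range (b * q) ⊆ singleDigitSet b q + singleDigitSet b q := by
  intro n hn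
  have hlt : n < b * q := mem_range.mp hn
  have low_mem : n % b ∈ singleDigitSet b q :=
    mem_union_left _ (mem_range.mpr (Nat.mod_lt n (Nat.pos_of_lt_mul_right hlt)))
  have high_mem : b * (n / b) ∈ singleDigitSet b q :=
    mem_union_right _ (mem_image_of_mem _ (mem_range.mpr (Nat.div_lt_of_lt_mul hlt)))
  exact mem_add.mpr ⟨_, low_mem, _, high_mem, Nat.mod_add_div n b⟩

theorem image_natCast_add_image_natCast_eq_univ {m : ℕ} [NeZero m] {B C : Finset ℕ}
    (h : range m ⊆ B + C) :
    B.image (Nat.cast : ℕ → ZMod m) + C.image (Nat.cast : ℕ → ZMod m) = univ := by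
  rw [← Nat.coe_castAddMonoidHom, ← image_add, eq_univ_iff_forall]
  exact fun n ↦ mem_image.mpr ⟨n.val, h (mem_range.mpr n.val_lt), ZMod.natCast_zmod_val n⟩

theorem stmt_1_general (b q m : ℕ) (hm : 0 < m) (hmbq : m ≤ b * q) :
    ∃ A : Finset (ZMod m), ∀ n : ZMod m,
      1 ≤ ((A ×ˢ A).filter (fun p => p.1 + p.2 = n)).card ∧
      ((A ×ˢ A).filter (fun p => p.1 + p.2 = n)).card ≤ b + q := by
  have : NeZero m := ⟨hm.ne'⟩
  let A : Finset (ZMod m) := (singleDigitSet b q).image Nat.cast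
  have add_self_eq_univ : A + A = univ :=
    image_natCast_add_image_natCast_eq_univ
      ((range_mono hmbq).trans (range_mul_subset_singleDigitSet_add_self b q))
  have card_le : #A ≤ b + q := card_image_le.trans (card_singleDigitSet_le b q)
  simp only [card_add_eq]
  exact ⟨A, fun n ↦ ⟨addConvolution_pos.mpr (add_self_eq_univ ▸ mem_univ n),
    addConvolution_le_card_left.trans card_le⟩⟩

theorem stmt_1 (m : ℕ) (hm : 0 < m) (hm' : m ≤ 4356) :
    ∃ A : Finset (ZMod m), ∀ n : ZMod m,
      1 ≤ ((A ×ˢ A).filter (fun p => p.1 + p.2 = n)).card ∧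
      ((A ×ˢ A).filter (fun p => p.1 + p.2 = n)).card ≤ 132 :=
  stmt_1_general 66 66 m hm hm'
end

section
/- For every real number x ≥ 33, there exists a prime p with x < p ≤ 2x/√3. -/
/-!
Suppose that `(N / 8, N / 7]` contains no prime. Take integer weights `a` on divisors `t` with
`∑ a / t = 0`. By Stirling's formula, `∑ a log ⌊N / t⌋!` is `N ∑ -(a / t) log t` up to a logarithmic
error; by Chebyshev's identity, it equals `∑ Λ(n) F(⌊N / n⌋)` with the periodic function
`F(v) = ∑ a ⌊v / t⌋`. The weights are chosen such that `F` is at most `1`, and nonpositive below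
`763` except at `7`. Since `⌊N / n⌋ = 7` means `n ∈ (N / 8, N / 7]`, only proper prime powers and
the `n ≤ N / 763` can contribute positively, and for `N ≥ 29000000` these amount to less than the
main term. This gives a prime in `(x, 8 * x / 7]` for `x ≥ 3625000`. For smaller `x` one climbs a
ladder of primes with ratios at most `15 / 13`; both `8 / 7` and `15 / 13` are below `2 / √3`.
-/

open ArithmeticFunction hiding log id
open Finset Real
open scoped Chebyshev Nat

theorem log_factorial_eq_sum_vonMangoldt_mul (N : ℕ) :
    log N ! = ∑ n ∈ Ioc 0 N, Λ n * (N / n : ℕ) := by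
  rw [← sum_Ioc_mul_zeta_eq_sum, vonMangoldt_mul_zeta]
  induction N with
  | zero => simp
  | succ k ih =>
    rw [Nat.factorial_succ, sum_Ioc_succ_top k.zero_le, ← ih, Nat.cast_mul,
      log_mul (by positivity) (by positivity), log_apply, add_comm]

theorem log_factorial_div_eq_sum_vonMangoldt_mul (N t : ℕ) :
    log (N / t)! = ∑ n ∈ Ioc 0 N, Λ n * (N / n / t : ℕ) := by
  have hsub : Ioc 0 (N / t) ⊆ Ioc 0 N := Ioc_subset_Ioc_right (Nat.div_le_self N t)
  simp_rw [log_factorial_eq_sum_vonMangoldt_mul, Nat.div_right_comm N _ t]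
  refine sum_subset hsub fun n hn hn' => ?_
  have : N / t < n := by simp_all
  simp [Nat.div_eq_of_lt this]

/-- The step function `F(v) = ∑ a ⌊v / t⌋` attached to a finite family of integer weights, where the
pair `(t, a)` gives the weight `a` to the divisor `t`. -/
def floorSum (w : Finset (ℕ × ℤ)) (v : ℕ) : ℤ :=
  ∑ p ∈ w, p.2 * ((v / p.1 : ℕ) : ℤ)

/-- The combination `∑ a log ⌊N / t⌋!` of logarithms of factorials attached to the weights
`(t, a) ∈ w`, as in Chebyshev's method. -/
noncomputable def logFactorialSum (w : Finset (ℕ × ℤ)) (N : ℕ) : ℝ :=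
  ∑ p ∈ w, p.2 * log (N / p.1)!

section Weights

variable {w : Finset (ℕ × ℤ)}

theorem logFactorialSum_eq_sum_vonMangoldt_mul (w : Finset (ℕ × ℤ)) (N : ℕ) :
    logFactorialSum w N = ∑ n ∈ Ioc 0 N, Λ n * floorSum w (N / n) := by
  simp_rw [logFactorialSum, floorSum, log_factorial_div_eq_sum_vonMangoldt_mul, Int.cast_sum,
    mul_sum]
  rw [sum_comm]
  refine sum_congr rfl fun n _ => sum_congr rfl fun p _ => ?_
  rw [Int.cast_mul, Int.cast_natCast, mul_left_comm]

theorem floorSum_add_mul {L : ℕ} (hdvd : ∀ p ∈ w, p.1 ∣ L) (r k : ℕ) :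
    floorSum w (r + L * k) = floorSum w r + k * floorSum w L := by
  simp_rw [floorSum, mul_sum, ← sum_add_distrib]
  refine sum_congr rfl fun p hp => ?_
  obtain ⟨c, hc⟩ := hdvd p hp
  obtain ht | ht := p.1.eq_zero_or_pos
  · simp [ht]
  rw [hc, mul_assoc, Nat.add_mul_div_left _ _ ht, Nat.mul_div_cancel_left _ ht]
  push_cast
  ring

theorem floorSum_mod {L : ℕ} (hdvd : ∀ p ∈ w, p.1 ∣ L) (h0 : floorSum w L = 0) (v : ℕ) :
    floorSum w (v % L) = floorSum w v := by
  conv_rhs => rw [← Nat.mod_add_div v L, floorSum_add_mul hdvd, h0, mul_zero, add_zero]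

theorem sum_vonMangoldt_filter_le_div (N : ℕ) {b : ℕ} (hb : b ≠ 0) :
    ∑ n ∈ Ioc 0 N with b ≤ N / n, Λ n = ψ (N / b) := by
  rw [Chebyshev.psi, Nat.floor_div_eq_div]
  congr 1
  ext n
  have hswap (hn : 0 < n) : b ≤ N / n ↔ n ≤ N / b := by
    rw [Nat.le_div_iff_mul_le hn, Nat.le_div_iff_mul_le hb.pos, mul_comm]
  have := Nat.div_le_self N b
  grind

theorem sum_vonMangoldt_filter_div_eq_le {N a : ℕ} (ha : a ≠ 0)
    (hno : ∀ p : ℕ, p.Prime → N / p ≠ a) :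
    ∑ n ∈ Ioc 0 N with N / n = a, Λ n ≤ ψ (N / a) - θ (N / a) := by
  rw [Chebyshev.psi_sub_theta_eq_sum_not_prime, Nat.floor_div_eq_div]
  refine sum_le_sum_of_subset_of_nonneg (fun n hn => ?_) fun _ _ _ => vonMangoldt_nonneg
  obtain ⟨hn, rfl⟩ := mem_filter.1 hn
  have hle : n ≤ N / (N / n) := (Nat.le_div_iff_mul_le ha.pos).2 (Nat.mul_div_le N n)
  have hprime : ¬ n.Prime := fun h => hno n h rfl
  grind

theorem logFactorialSum_le {a b : ℕ} (ha : a ≠ 0) (hb : b ≠ 0)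
    (hw : ∀ v, floorSum w v ≤ (if v = a then 1 else 0) + (if b ≤ v then 1 else 0))
    {N : ℕ} (hno : ∀ p : ℕ, p.Prime → N / p ≠ a) :
    logFactorialSum w N ≤ (ψ (N / a) - θ (N / a)) + ψ (N / b) := by
  calc logFactorialSum w N
      = ∑ n ∈ Ioc 0 N, Λ n * floorSum w (N / n) := logFactorialSum_eq_sum_vonMangoldt_mul w N
    _ ≤ ∑ n ∈ Ioc 0 N, Λ n * ((if N / n = a then 1 else 0) + (if b ≤ N / n then 1 else 0)) := by
        gcongr with n
        exact_mod_cast hw (N / n)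
    _ = ∑ n ∈ Ioc 0 N with N / n = a, Λ n + ∑ n ∈ Ioc 0 N with b ≤ N / n, Λ n := by
        simp_rw [mul_add, mul_ite, mul_one, mul_zero, sum_add_distrib, sum_filter]
    _ ≤ (ψ (N / a) - θ (N / a)) + ψ (N / b) := by
        rw [sum_vonMangoldt_filter_le_div N hb]
        gcongr
        exact sum_vonMangoldt_filter_div_eq_le ha hno

theorem mul_log_sub_le_mul_log_sub {a b : ℝ} (ha : 0 < a) (hb : 0 < b) :
    b * log a - a ≤ b * log b - b := by
  have h := mul_le_mul_of_nonneg_left (log_le_sub_one_of_pos (div_pos ha hb)) hb.le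
  rw [log_div ha.ne' hb.ne', mul_sub_one, mul_div_cancel₀ _ hb.ne'] at h
  linarith

theorem log_factorial_le (n : ℕ) : log n ! ≤ n * log n - n + log n / 2 + 1 := by
  obtain _ | k := n
  · simp
  have h : log (Stirling.stirlingSeq (k + 1)) ≤ log (Stirling.stirlingSeq 1) :=
    Stirling.log_stirlingSeq'_antitone k.zero_le
  simp only [Stirling.log_stirlingSeq_formula] at h
  rw [log_mul (by simp) (by positivity), log_div (by positivity) (by simp)] at h
  norm_num at h ⊢
  linarith

theorem abs_log_factorial_floor_sub_le {y : ℝ} (hy : 1 ≤ y) :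
    |log ⌊y⌋₊ ! - (y * log y - y)| ≤ log y + 1 := by
  have hn : ⌊y⌋₊ ≠ 0 := (Nat.floor_pos.2 hy).ne'
  have hn1 : (1 : ℝ) ≤ ⌊y⌋₊ := by exact_mod_cast Nat.floor_pos.2 hy
  have hle : (⌊y⌋₊ : ℝ) ≤ y := Nat.floor_le (by linarith)
  have hlt : y < ⌊y⌋₊ + 1 := Nat.lt_floor_add_one y
  have hupper := log_factorial_le ⌊y⌋₊
  have hlower := Stirling.le_log_factorial_stirling hn
  have hconv := mul_log_sub_le_mul_log_sub (by linarith : 0 < y) (by linarith : (0 : ℝ) < ⌊y⌋₊)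
  have hconv' := mul_log_sub_le_mul_log_sub (by linarith : (0 : ℝ) < ⌊y⌋₊) (by linarith : 0 < y)
  have hlog : log ⌊y⌋₊ ≤ log y := log_le_log (by linarith) hle
  have hlog0 : 0 ≤ log ⌊y⌋₊ := log_nonneg hn1
  have hpi : 0 ≤ log (2 * π) := log_nonneg (by linarith [pi_gt_three])
  have hfloor : ⌊y⌋₊ * log ⌊y⌋₊ ≤ y * log ⌊y⌋₊ := by gcongr
  have hsucc : y * log y ≤ (⌊y⌋₊ + 1) * log y := by gcongr; exact log_nonneg hy
  rw [abs_le]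
  constructor <;> linarith

theorem abs_logFactorialSum_sub_le {N : ℕ} (hsum : ∑ p ∈ w, (p.2 : ℝ) / p.1 = 0)
    (hw : ∀ p ∈ w, p.1 ∈ Ioc 0 N) :
    |logFactorialSum w N - N * ∑ p ∈ w, -(p.2 / p.1 * log p.1)| ≤
      (∑ p ∈ w, |p.2| : ℤ) * (log N + 1) := by
  have hmain : N * ∑ p ∈ w, -(p.2 / p.1 * log p.1) =
      ∑ p ∈ w, p.2 * (N / p.1 * log (N / p.1) - N / p.1 : ℝ) := by
    have hterm : ∀ p ∈ w, p.2 * (N / p.1 * log (N / p.1) - N / p.1 : ℝ) =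
        N * -(p.2 / p.1 * log p.1) + N * (log N - 1) * (p.2 / p.1) := by
      intro p hp
      obtain ⟨h0, hN⟩ := mem_Ioc.1 (hw p hp)
      rw [log_div (Nat.cast_ne_zero.2 (by lia)) (Nat.cast_ne_zero.2 h0.ne')]
      ring
    rw [sum_congr rfl hterm, sum_add_distrib, ← mul_sum, ← mul_sum, hsum, mul_zero, add_zero]
  rw [hmain, logFactorialSum, ← sum_sub_distrib, Int.cast_sum, sum_mul]
  refine (abs_sum_le_sum_abs _ _).trans (sum_le_sum fun p hp => ?_)
  obtain ⟨h0, hN⟩ := mem_Ioc.1 (hw p hp)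
  have h0' : (1 : ℝ) ≤ p.1 := by exact_mod_cast h0
  have hN' : (p.1 : ℝ) ≤ N := by exact_mod_cast hN
  have hquot : 1 ≤ (N : ℝ) / p.1 := (one_le_div₀ (by linarith)).2 hN'
  have hstirling := abs_log_factorial_floor_sub_le hquot
  rw [Nat.floor_div_eq_div] at hstirling
  rw [← mul_sub, abs_mul, Int.cast_abs]
  gcongr
  grw [hstirling, div_le_self (by positivity) h0']

end Weights

theorem psi_div_sub_theta_div_le {x d : ℝ} (hd : 1 ≤ d) (hdx : d ≤ x) :
    ψ (x / d) - θ (x / d) ≤ 2 * (√x / √d) * log x := by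
  have hd0 : 0 < d := by linarith
  have hquot : 0 < x / d := div_pos (hd0.trans_le hdx) hd0
  grw [Chebyshev.psi_sub_theta_le ((one_le_div₀ hd0).2 hdx), sqrt_div' x hd0.le,
    div_le_self (hd0.le.trans hdx) hd]

theorem psi_div_le {x d : ℝ} (hd : 1 ≤ d) (hdx : d ≤ x) :
    ψ (x / d) ≤ log 4 * (x / d) + 2 * (√x / √d) * log x := by
  have hdiff := psi_div_sub_theta_div_le hd hdx
  have htheta := Chebyshev.theta_le_log4_mul_x (x := x / d) (by bound)
  linarith

/-- The weights `(t, a)` fed to Chebyshev's method, supported on divisors of `1680`. They were found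
by linear programming: the main term `∑ -(a / t) log t` should be large, while the step function
must be nonpositive below `763` except for the value `1` at `7`. -/
def chebyshevWeights : Finset (ℕ × ℤ) :=
  {(7, 1), (8, -1), (14, -1), (16, 1), (21, -1), (24, 1), (35, -1), (40, 1), (48, -1), (56, 1),
    (80, -1), (84, 1), (105, 1), (112, -1), (120, -1), (140, 2), (168, -1), (240, 1), (280, -2),
    (336, 1), (560, 1), (840, 2), (1680, -1)}

theorem fst_dvd_of_mem_chebyshevWeights : ∀ p ∈ chebyshevWeights, p.1 ∣ 1680 := by decide

theorem sum_abs_chebyshevWeights : ∑ p ∈ chebyshevWeights, |p.2| = 26 := by decide +kernel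

theorem sum_div_chebyshevWeights : ∑ p ∈ chebyshevWeights, (p.2 : ℚ) / p.1 = 0 := by decide +kernel

theorem floorSum_chebyshevWeights_le (v : ℕ) :
    floorSum chebyshevWeights v ≤ (if v = 7 then 1 else 0) + (if 763 ≤ v then 1 else 0) := by
  have hperiod : ∀ r < 1680,
      floorSum chebyshevWeights r ≤ (if r = 7 then 1 else 0) + (if 763 ≤ r then 1 else 0) := by
    decide +kernel
  have hmod := hperiod (v % 1680) (Nat.mod_lt v (by norm_num))
  rw [floorSum_mod fst_dvd_of_mem_chebyshevWeights (by decide +kernel)] at hmod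
  grind

theorem log_eq_sum_primeFactors {t n : ℕ} (hn : n ≠ 0) (ht : t ∣ n) :
    log t = ∑ q ∈ n.primeFactors, t.factorization q * log q := by
  rw [log_nat_eq_sum_factorization]
  exact Finsupp.sum_of_support_subset _ (Nat.primeFactors_mono ht hn) _ (by simp)

theorem sum_div_mul_log_chebyshevWeights :
    ∑ p ∈ chebyshevWeights, -(p.2 / p.1 * log p.1) = log 2 / 12 + 3 / 280 * log 3 - log 7 / 30 := by
  have hcoeff (q : ℕ) (c : ℚ)
      (h : ∑ p ∈ chebyshevWeights, (p.2 : ℚ) / p.1 * p.1.factorization q = c) :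
      ∑ p ∈ chebyshevWeights, (p.2 : ℝ) / p.1 * p.1.factorization q = c := by
    rw [← h]; push_cast; rfl
  have h2 := hcoeff 2 (-1 / 12) (by decide +kernel)
  have h3 := hcoeff 3 (-3 / 280) (by decide +kernel)
  have h5 := hcoeff 5 0 (by decide +kernel)
  have h7 := hcoeff 7 (1 / 30) (by decide +kernel)
  have hfactors : Nat.primeFactors 1680 = {2, 3, 5, 7} := by decide +kernel
  calc ∑ p ∈ chebyshevWeights, -(p.2 / p.1 * log p.1)
      = -∑ q ∈ Nat.primeFactors 1680,
          (∑ p ∈ chebyshevWeights, (p.2 : ℝ) / p.1 * p.1.factorization q) * log q := by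
        simp_rw [sum_mul]
        rw [sum_comm, ← sum_neg_distrib]
        refine sum_congr rfl fun p hp => ?_
        rw [log_eq_sum_primeFactors (by norm_num) (fst_dvd_of_mem_chebyshevWeights p hp), mul_sum]
        simp_rw [mul_assoc]
    _ = log 2 / 12 + 3 / 280 * log 3 - log 7 / 30 := by
        rw [hfactors, sum_insert (by decide), sum_insert (by decide), sum_insert (by decide),
          sum_singleton, h2, h3, h5, h7]
        push_cast
        ring

theorem log_seven_lt : log 7 < 1.9461 := by
  have hpow : 4 * log 7 = log (2400 * (2401 / 2400)) := by
    rw [show (2400 * (2401 / 2400) : ℝ) = 7 ^ 4 by norm_num, log_pow, Nat.cast_ofNat]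
  have hsmooth : log 2400 = 5 * log 2 + log 3 + 2 * log 5 := by
    rw [show (2400 : ℝ) = 2 ^ 5 * 3 * 5 ^ 2 by norm_num, log_mul (by norm_num) (by norm_num),
      log_mul (by norm_num) (by norm_num), log_pow, log_pow]
    norm_num
  rw [log_mul (by norm_num) (by norm_num), hsmooth] at hpow
  linarith [log_two_lt_d9, log_three_lt_d9, log_five_lt_d9,
    log_le_sub_one_of_pos (show (0 : ℝ) < 2401 / 2400 by norm_num)]

theorem lt_sum_div_mul_log_chebyshevWeights :
    0.00466 < ∑ p ∈ chebyshevWeights, -(p.2 / p.1 * log p.1) := by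
  rw [sum_div_mul_log_chebyshevWeights]
  linarith [log_two_gt_d9, log_three_gt_d9, log_seven_lt]

theorem psi_sub_theta_add_psi_lt {x : ℝ} (hx : 29000000 ≤ x) :
    ψ (x / 7) - θ (x / 7) + ψ (x / 763) < 0.00466 * x - 26 * (log x + 1) := by
  have hs : 5385 ≤ √x := le_sqrt_of_sq_le (by linarith)
  have hsq : √x ^ 2 = x := sq_sqrt (by linarith)
  have hlog : log x ≤ 2 * (√x / 4096 + 7.318) := by
    have htangent := log_le_sub_one_of_pos (show 0 < √x / 2 ^ 12 by positivity)
    rw [log_div (by positivity) (by norm_num), log_pow, log_sqrt (by linarith)] at htangent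
    linarith [log_two_lt_d9]
  have hlog0 : 0 ≤ log x := log_nonneg (by linarith)
  have hlog4 : log 4 ≤ 1.3863 := by linarith [log_four_eq, log_two_lt_d9]
  have hsqrt7 : 13 / 5 ≤ √7 := le_sqrt_of_sq_le (by norm_num)
  have hsqrt763 : 27 ≤ √763 := le_sqrt_of_sq_le (by norm_num)
  have h7 := psi_div_sub_theta_div_le (x := x) (d := 7) (by norm_num) (by linarith)
  have h763 := psi_div_le (x := x) (d := 763) (by norm_num) (by linarith)
  grw [← hsqrt7, hlog] at h7
  grw [hlog4, ← hsqrt763, hlog] at h763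
  grw [h7, h763, hlog]
  generalize √x = s at *
  subst hsq
  have hquadratic : 5385 * s ≤ s ^ 2 := by nlinarith
  linarith

theorem exists_prime_div_eq_seven {N : ℕ} (hN : 29000000 ≤ N) : ∃ p : ℕ, p.Prime ∧ N / p = 7 := by
  by_contra! hno
  have hupper := logFactorialSum_le (by norm_num) (by norm_num) floorSum_chebyshevWeights_le hno
  have hlower := abs_logFactorialSum_sub_le (w := chebyshevWeights) (N := N)
    (by exact_mod_cast congrArg (Rat.cast : ℚ → ℝ) sum_div_chebyshevWeights) fun p hp =>
      have hdvd := fst_dvd_of_mem_chebyshevWeights p hp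
      mem_Ioc.2 ⟨Nat.pos_of_dvd_of_pos hdvd (by norm_num),
        (Nat.le_of_dvd (by norm_num) hdvd).trans (by lia)⟩
  have hmain := mul_le_mul_of_nonneg_left lt_sum_div_mul_log_chebyshevWeights.le N.cast_nonneg
  have herror := psi_sub_theta_add_psi_lt (x := N) (by exact_mod_cast hN)
  rw [sum_abs_chebyshevWeights, abs_le] at hlower
  push_cast at hupper hlower
  linarith

/-- A ladder of primes climbing from `37` past `3921226`: each one is at most `15 / 13` times its
predecessor, and is chosen as large as that allows. -/
def primeLadder : List ℕ :=
  [37, 41, 47, 53, 61, 67, 73, 83, 89, 101, 113, 127, 139, 157, 181, 199, 229, 263, 293, 337,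
    383, 439, 503, 577, 661, 761, 877, 1009, 1163, 1327, 1531, 1759, 2029, 2341, 2699, 3109,
    3583, 4133, 4759, 5483, 6323, 7283, 8389, 9679, 11161, 12853, 14827, 17107, 19727, 22751,
    26251, 30271, 34919, 40289, 46477, 53623, 61871, 71389, 82361, 95027, 109639, 126499,
    145949, 168391, 194269, 224153, 258637, 298427, 344327, 397297, 458407, 528929, 610301,
    704189, 812519, 937511, 1081741, 1248151, 1440119, 1661669, 1917301, 2212247, 2552587,
    2945291, 3398407, 3921227]

theorem prime_of_mem_primeLadder {p : ℕ} (hp : p ∈ primeLadder) : p.Prime := by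
  revert p
  simp only [primeLadder, List.forall_mem_cons]
  norm_num

theorem exists_mem_gt_of_isChain {a b : ℕ} {x : ℝ} {p : ℕ} {l : List ℕ}
    (hchain : (p :: l).IsChain fun q r => a * r ≤ b * q) (hp : (a * p : ℝ) ≤ b * x)
    (hx : ∃ q ∈ p :: l, x < q) : ∃ q ∈ p :: l, x < q ∧ (a * q : ℝ) ≤ b * x := by
  induction l generalizing p with
  | nil => simp_all
  | cons r l ih =>
    by_cases hxp : x < p
    · exact ⟨p, List.mem_cons_self, hxp, hp⟩
    obtain ⟨hpr, hchain⟩ := List.isChain_cons_cons.1 hchain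
    have hr : (a * r : ℝ) ≤ b * x := by
      calc (a * r : ℝ) ≤ b * p := by exact_mod_cast hpr
        _ ≤ b * x := by gcongr; exact not_lt.1 hxp
    obtain ⟨q, hq, hxq⟩ := ih hchain hr (by simp_all)
    exact ⟨q, List.mem_cons_of_mem p hq, hxq⟩

theorem exists_prime_lt_and_mul_le_of_lt {x : ℝ} (hx : 33 ≤ x) (hlt : x < 3921227) :
    ∃ p : ℕ, p.Prime ∧ x < p ∧ (13 * p : ℝ) ≤ 15 * x := by
  have hchain : primeLadder.IsChain fun q r => 13 * r ≤ 15 * q := by decide +kernel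
  obtain ⟨p, hp, hxp, hpx⟩ := exists_mem_gt_of_isChain hchain (x := x) (by norm_num; linarith)
    ⟨3921227, by decide +kernel, by exact_mod_cast hlt⟩
  exact ⟨p, prime_of_mem_primeLadder hp, hxp, by exact_mod_cast hpx⟩

theorem exists_prime_lt_and_mul_le_of_ge {x : ℝ} (hx : 3625000 ≤ x) :
    ∃ p : ℕ, p.Prime ∧ x < p ∧ (7 * p : ℝ) ≤ 8 * x := by
  have hx0 : 0 ≤ 8 * x := by linarith
  obtain ⟨p, hp, hdiv⟩ := exists_prime_div_eq_seven
    (Nat.le_floor (by push_cast; linarith) : 29000000 ≤ ⌊8 * x⌋₊)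
  have hlower : 7 * p ≤ ⌊8 * x⌋₊ := (Nat.le_div_iff_mul_le hp.pos).1 hdiv.ge
  have hupper : ⌊8 * x⌋₊ < 8 * p := (Nat.div_lt_iff_lt_mul hp.pos).1 (by lia)
  rw [Nat.floor_lt hx0] at hupper
  rw [Nat.le_floor_iff hx0] at hlower
  push_cast at hlower hupper
  exact ⟨p, hp, by linarith, hlower⟩

theorem exists_prime_lt_and_mul_le {x : ℝ} (hx : 33 ≤ x) :
    ∃ p : ℕ, p.Prime ∧ x < p ∧ (13 * p : ℝ) ≤ 15 * x := by
  obtain hlt | hge := lt_or_ge x 3921227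
  · exact exists_prime_lt_and_mul_le_of_lt hx hlt
  · obtain ⟨p, hp, hxp, hpx⟩ := exists_prime_lt_and_mul_le_of_ge (by linarith)
    exact ⟨p, hp, hxp, by linarith⟩

theorem stmt_3 (x : ℝ) (hx : 33 ≤ x) :
    ∃ p : ℕ, p.Prime ∧ x < p ∧ (p : ℝ) ≤ 2 * x / Real.sqrt 3 := by
  obtain ⟨p, hp, hxp, hpx⟩ := exists_prime_lt_and_mul_le hx
  have hsqrt : √3 ≤ 26 / 15 := sqrt_le_iff.2 (by norm_num)
  refine ⟨p, hp, hxp, ?_⟩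
  calc (p : ℝ) ≤ 2 * x / (26 / 15) := by linarith
    _ ≤ 2 * x / √3 := by gcongr
end

section
/- Let m₁ and m₂ be positive integers with (3/2)·m₁ ≤ m₂ < 2·m₁, and suppose A ⊆ {0,1,...,m₁−1} satisfies 1 ≤ σ_A(n mod m₁) ≤ r for every integer n, where σ counts ordered pairs (a₁,a₂) ∈ A×A with a₁+a₂ ≡ n (mod m₁). Let r' = m₂ − m₁ and B = A ∪ {a + r' : a ∈ A}. Then for every integer n, the number of ordered pairs (b₁,b₂) ∈ B×B with b₁+b₂ ≡ n (mod m₂) is at most 4r. -/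
/-!
Consider pairs from `A ∪ (d + A)` and `B ∪ (d + B)` modulo `M = m + d`. Let `R x` be the number of
representations `x = a + b` over the integers with `a ∈ A`, `b ∈ B`, and `S x` the number of those
modulo `M`. Splitting the pairs according to the translates they come from, at most
`S x + 2 * S (x - d) + S (x - 2 * d)` of them have sum `x` modulo `M`. Let `0 ≤ x < M`. As all sums
`a + b` lie in `[0, 2 * m)`, one has `S (x - k) ≤ R (x - k) + R (x - k + M)` for `k = 0, d, 2 * d`.
Since `x - d + M = x + m` and `x - 2 * d + M = x - d + m`, the resulting eight terms contain
`R x + R (x + m)` and `R (x - d) + R (x - d + m)`, each at most `r`. Of the four remaining terms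
`R (x - 2 * d)`, `R (x - d)`, `R (x + m)`, `R (x + M)`, at most two are nonzero, because
`m ≤ 2 * d`.
-/

open Finset
open scoped Pointwise

/-- The modular analogue `σ` of `Finset.addConvolution`: the number of pairs in `A × B` whose sum is
congruent to `x` modulo `m`. The sets consist of integers rather than residue classes, so that the
same sets can be considered with respect to different moduli. -/
def modConvolution (m : ℤ) (A B : Finset ℤ) (x : ℤ) : ℕ :=
  #{p ∈ A ×ˢ B | p.1 + p.2 ≡ x [ZMOD m]}

section ModConvolution

variable (m : ℤ) (A B : Finset ℤ) (x : ℤ)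

lemma modConvolution_emod : modConvolution m A B (x % m) = modConvolution m A B x :=
  congrArg card <| filter_congr fun _ _ =>
    ⟨(·.trans (Int.mod_modEq x m)), (·.trans (Int.mod_modEq x m).symm)⟩

lemma modConvolution_union_left_le (A' : Finset ℤ) :
    modConvolution m (A ∪ A') B x ≤ modConvolution m A B x + modConvolution m A' B x := by
  rw [modConvolution, union_product, filter_union]
  exact card_union_le _ _

lemma modConvolution_union_right_le (B' : Finset ℤ) :
    modConvolution m A (B ∪ B') x ≤ modConvolution m A B x + modConvolution m A B' x := by
  rw [modConvolution, product_union, filter_union]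
  exact card_union_le _ _

lemma modConvolution_vadd_vadd (u v : ℤ) :
    modConvolution m (u +ᵥ A) (v +ᵥ B) x = modConvolution m A B (x - (u + v)) := by
  refine (card_equiv ((Equiv.addLeft u).prodCongr (Equiv.addLeft v)) fun p => ?_).symm
  have hshift : p.1 + p.2 ≡ x - (u + v) [ZMOD m] ↔ u + p.1 + (v + p.2) ≡ x [ZMOD m] := by
    rw [Int.modEq_iff_dvd, Int.modEq_iff_dvd]
    ring_nf
  simp [hshift, mem_vadd_finset]

lemma modConvolution_union_vadd_le (d : ℤ) :
    modConvolution m (A ∪ (d +ᵥ A)) (B ∪ (d +ᵥ B)) x ≤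
      modConvolution m A B x + 2 * modConvolution m A B (x - d) +
        modConvolution m A B (x - 2 * d) := by
  have hvadd_left : modConvolution m (d +ᵥ A) B x = modConvolution m A B (x - d) := by
    simpa using modConvolution_vadd_vadd m A B x d 0
  have hvadd_right : modConvolution m A (d +ᵥ B) x = modConvolution m A B (x - d) := by
    simpa using modConvolution_vadd_vadd m A B x 0 d
  calc
    _ ≤ modConvolution m A (B ∪ (d +ᵥ B)) x + modConvolution m (d +ᵥ A) (B ∪ (d +ᵥ B)) x :=
      modConvolution_union_left_le ..
    _ ≤ (modConvolution m A B x + modConvolution m A (d +ᵥ B) x) +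
        (modConvolution m (d +ᵥ A) B x + modConvolution m (d +ᵥ A) (d +ᵥ B) x) :=
      add_le_add (modConvolution_union_right_le ..) (modConvolution_union_right_le ..)
    _ = _ := by
      rw [hvadd_left, hvadd_right, modConvolution_vadd_vadd, ← two_mul d]
      ring

variable {m A B x}

lemma addConvolution_add_addConvolution_le_modConvolution (hm : m ≠ 0) :
    A.addConvolution B x + A.addConvolution B (x + m) ≤ modConvolution m A B x := by
  have hdisj : Disjoint {p ∈ A ×ˢ B | p.1 + p.2 = x} {p ∈ A ×ˢ B | p.1 + p.2 = x + m} :=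
    disjoint_filter.2 fun p _ hx hxm => hm (by linarith)
  rw [addConvolution, addConvolution, modConvolution, ← card_union_of_disjoint hdisj, ← filter_or]
  refine card_le_card (monotone_filter_right _ fun p _ hp => ?_)
  rcases hp with hp | hp <;> simp [hp]

lemma modConvolution_le_addConvolution_add_addConvolution
    (hAB : A + B ⊆ Ioo (x - m) (x + 2 * m)) :
    modConvolution m A B x ≤ A.addConvolution B x + A.addConvolution B (x + m) := by
  rw [addConvolution, addConvolution, modConvolution]
  refine le_trans (card_le_card ?_) (card_union_le _ _)
  rw [← filter_or]
  intro p hp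
  obtain ⟨hpAB, hmod⟩ := mem_filter.1 hp
  refine mem_filter.2 ⟨hpAB, ?_⟩
  obtain ⟨hlower, hupper⟩ := mem_Ioo.1 <|
    hAB (add_mem_add (mem_product.1 hpAB).1 (mem_product.1 hpAB).2)
  obtain ⟨q, hq⟩ := Int.modEq_iff_add_fac.1 hmod.symm
  have hq_lower : -1 < q := by nlinarith
  have hq_upper : q < 2 := by nlinarith
  obtain rfl | rfl : q = 0 ∨ q = 1 := by lia
  · left; linarith
  · right; linarith

end ModConvolution

section TwoTranslates

variable {m d : ℤ} {r : ℕ} {A B : Finset ℤ}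

lemma addConvolution_four_shifts_le (hd : m ≤ 2 * d) (hAB : A + B ⊆ Ico 0 (2 * m))
    (hR : ∀ x, A.addConvolution B x ≤ r) (x : ℤ) :
    A.addConvolution B (x - 2 * d) + A.addConvolution B (x - d) + A.addConvolution B (x + m) +
      A.addConvolution B (x + m + d) ≤ 2 * r := by
  have hzero : ∀ y, y < 0 ∨ 2 * m ≤ y → A.addConvolution B y = 0 := fun y hy =>
    addConvolution_eq_zero.2 fun hmem => by have := mem_Ico.1 (hAB hmem); lia
  have h₁ := hR (x - 2 * d)
  have h₂ := hR (x - d)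
  have h₃ := hR (x + m)
  have h₄ := hR (x + m + d)
  rcases lt_or_ge x d with hxd | hdx
  · rw [hzero (x - 2 * d) (by lia), hzero (x - d) (by lia)]
    lia
  rcases lt_or_ge x (2 * d) with hx2d | h2dx
  · rw [hzero (x - 2 * d) (by lia), hzero (x + m + d) (by lia)]
    lia
  · rw [hzero (x + m) (by lia), hzero (x + m + d) (by lia)]
    lia

theorem stmt_7_general (hm : 0 < m) (hd : m ≤ 2 * d) (hAB : A + B ⊆ Ico 0 (2 * m))
    (hr : ∀ x, modConvolution m A B x ≤ r) (x : ℤ) :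
    modConvolution (m + d) (A ∪ (d +ᵥ A)) (B ∪ (d +ᵥ B)) x ≤ 4 * r := by
  rw [← modConvolution_emod]
  have hx : x % (m + d) ∈ Ico 0 (m + d) :=
    mem_Ico.2 ⟨Int.emod_nonneg _ (by lia), Int.emod_lt_of_pos _ (by lia)⟩
  generalize x % (m + d) = y at hx
  set R := A.addConvolution B
  have hpair : ∀ z, R z + R (z + m) ≤ r := fun z =>
    (addConvolution_add_addConvolution_le_modConvolution hm.ne').trans (hr z)
  have hsplit : ∀ k, 0 ≤ k → k ≤ 2 * d →
      modConvolution (m + d) A B (y - k) ≤ R (y - k) + R (y - k + (m + d)) := by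
    refine fun k hk0 hk => modConvolution_le_addConvolution_add_addConvolution (hAB.trans ?_)
    intro s hs
    rw [mem_Ico] at hs hx
    rw [mem_Ioo]
    lia
  have hsplit₀ : modConvolution (m + d) A B y ≤ R y + R (y + m + d) := by
    simpa [add_assoc] using hsplit 0 le_rfl (by lia)
  have hsplit₁ : modConvolution (m + d) A B (y - d) ≤ R (y - d) + R (y + m) := by
    convert hsplit d (by lia) (by lia) using 3
    ring
  have hsplit₂ : modConvolution (m + d) A B (y - 2 * d) ≤ R (y - 2 * d) + R (y - d + m) := by
    convert hsplit (2 * d) (by lia) le_rfl using 3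
    ring
  calc
    _ ≤ modConvolution (m + d) A B y + 2 * modConvolution (m + d) A B (y - d) +
        modConvolution (m + d) A B (y - 2 * d) := modConvolution_union_vadd_le ..
    _ ≤ (R y + R (y + m + d)) + 2 * (R (y - d) + R (y + m)) +
        (R (y - 2 * d) + R (y - d + m)) := by gcongr
    _ = (R y + R (y + m)) + (R (y - d) + R (y - d + m)) +
        (R (y - 2 * d) + R (y - d) + R (y + m) + R (y + m + d)) := by ring
    _ ≤ r + r + 2 * r :=
      add_le_add (add_le_add (hpair y) (hpair (y - d)))
        (addConvolution_four_shifts_le hd hAB (fun z => le_of_add_le_left (hpair z)) y)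
    _ = 4 * r := by ring

end TwoTranslates

section NatCast

variable (A B : Finset ℕ)

lemma modConvolution_map_natCast (m n : ℕ) :
    modConvolution m (A.map Nat.castEmbedding) (B.map Nat.castEmbedding) n =
      #{p ∈ A ×ˢ B | (p.1 + p.2) % m = n % m} := by
  rw [modConvolution, ← prodMap_map_product, filter_map, card_map]
  congr 1
  refine filter_congr fun p _ => ?_
  change ((p.1 : ℤ) + p.2 ≡ n [ZMOD m]) ↔ p.1 + p.2 ≡ n [MOD m]
  rw [← Nat.cast_add, Int.natCast_modEq_iff]

lemma map_natCast_union_image_add (d : ℕ) :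
    (A ∪ A.image (· + d)).map Nat.castEmbedding =
      A.map Nat.castEmbedding ∪ ((d : ℤ) +ᵥ A.map (Nat.castEmbedding (R := ℤ))) := by
  rw [map_union]
  congr 1
  ext z
  simp [mem_vadd_finset, add_comm]

end NatCast

theorem stmt_7 (m₁ m₂ r : ℕ) (hm₁ : 0 < m₁) (h1 : 3 * m₁ ≤ 2 * m₂) (h2 : m₂ < 2 * m₁)
    (A : Finset ℕ) (hA : A ⊆ Finset.range m₁)
    (hrep : ∀ n : ℕ,
      1 ≤ ((A ×ˢ A).filter (fun p => (p.1 + p.2) % m₁ = n % m₁)).card ∧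
      ((A ×ˢ A).filter (fun p => (p.1 + p.2) % m₁ = n % m₁)).card ≤ r) :
    ∀ n : ℕ,
      (((A ∪ A.image (fun a => a + (m₂ - m₁))) ×ˢ (A ∪ A.image (fun a => a + (m₂ - m₁)))).filter
        (fun p => (p.1 + p.2) % m₂ = n % m₂)).card ≤ 4 * r := by
  intro n
  obtain ⟨d, rfl⟩ : ∃ d, m₂ = m₁ + d := Nat.exists_eq_add_of_le (by lia)
  have hsums : A.map Nat.castEmbedding + A.map Nat.castEmbedding ⊆ Ico (0 : ℤ) (2 * m₁) := by
    simp only [add_subset_iff, mem_map, Nat.castEmbedding_apply, mem_Ico]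
    rintro _ ⟨a, ha, rfl⟩ _ ⟨b, hb, rfl⟩
    have := mem_range.1 (hA ha)
    have := mem_range.1 (hA hb)
    lia
  have hcount : ∀ x : ℤ,
      modConvolution m₁ (A.map Nat.castEmbedding) (A.map Nat.castEmbedding) x ≤ r := by
    intro x
    obtain ⟨k, hk⟩ := Int.eq_ofNat_of_zero_le (Int.emod_nonneg x (b := m₁) (by lia))
    rw [← modConvolution_emod, hk, modConvolution_map_natCast]
    exact (hrep k).2
  rw [Nat.add_sub_cancel_left, ← modConvolution_map_natCast, map_natCast_union_image_add]
  exact_mod_cast stmt_7_general (by lia) (by lia) hsums hcount n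
end
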